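/- Let R be a basic left Harada algebra as below, let I be the two-sided ideal I := ⊕_{i,j} rad^{n_i-j+1}(e_{ij}R), set R̄ := R/I, and let F(T) := T ⊗_R R̄. Then for every finitely generated right R-module T of projective dimension at most 1, one has Ext^1_R(T, T) = 0 if and only if Ext^1_{R̄}(F(T), F(T)) = 0. -/

import Mathlib

/-!
Common setup.  `K` is an algebraically closed field and `R` a finite-dimensional associative
unital `K`-algebra.  Right `R`-modules are formalized as modules over the opposite ring `Rᵐᵒᵖ`
(so that `MulOpposite.op r • x = x * r`).
-/

open MulOpposite

/-- The right ideal `xR` of a ring `R`, as a submodule of `R` over `Rᵐᵒᵖ`. -/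
def rightIdeal (R : Type) [Ring R] (x : R) : Submodule Rᵐᵒᵖ R :=
  Submodule.span Rᵐᵒᵖ {x}

/-- The Jacobson radical of a submodule `N` (the intersection of the maximal submodules of the
module `N`), viewed as a submodule of the ambient module.  Iterating this operation gives the
iterated radicals `rad^k`. -/
def radSub {A M : Type} [Ring A] [AddCommGroup M] [Module A M] (N : Submodule A M) :
    Submodule A M :=
  Submodule.map N.subtype (sInf {P : Submodule A ↥N | IsCoatom P})

/-- A module is indecomposable if it is nonzero and admits no nontrivial direct sum
decomposition. -/
def IsIndecomposableMod (A M : Type) [Ring A] [AddCommGroup M] [Module A M] : Prop :=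
  Nontrivial M ∧ ∀ N N' : Submodule A M, IsCompl N N' → N = ⊥ ∨ N' = ⊥

/-- A module has projective dimension at most one iff it admits a surjection from a projective
module with projective kernel. -/
def PdLeOne (A : Type) [Ring A] (M : Type) [AddCommGroup M] [Module A M] : Prop :=
  ∃ (P : ModuleCat.{0} A) (f : ↥P →ₗ[A] M),
    Module.Projective A ↥P ∧ Function.Surjective f ∧
      Module.Projective A ↥(LinearMap.ker f)

/-- `Ext¹_A(M,N) = 0`, expressed by the splitting of every short exact sequence
`0 → N → E → M → 0`. -/
def Ext1Zero (A : Type) [Ring A] (M N : Type) [AddCommGroup M] [Module A M]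
    [AddCommGroup N] [Module A N] : Prop :=
  ∀ (E : ModuleCat.{0} A) (i : N →ₗ[A] ↥E) (p : ↥E →ₗ[A] M),
    Function.Injective i → Function.Surjective p → LinearMap.range i = LinearMap.ker p →
    ∃ s : M →ₗ[A] ↥E, p.comp s = LinearMap.id

/-- `X ∈ add T` : `X` is a direct summand of a finite direct sum of copies of `T`. -/
def InAdd (A : Type) [Ring A] (T X : Type) [AddCommGroup T] [Module A T]
    [AddCommGroup X] [Module A X] : Prop :=
  ∃ (k : ℕ) (f : X →ₗ[A] (Fin k → T)) (g : (Fin k → T) →ₗ[A] X),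
    g.comp f = LinearMap.id

/-- `T` is a (finitely generated) tilting right `R`-module: projective dimension at most one,
no self-extensions, and there is a short exact sequence `0 → R → T₀ → T₁ → 0` with
`T₀, T₁ ∈ add T`. -/
def IsTiltingRight (R : Type) [Ring R] (T : Type) [AddCommGroup T] [Module Rᵐᵒᵖ T] : Prop :=
  Module.Finite Rᵐᵒᵖ T ∧ PdLeOne Rᵐᵒᵖ T ∧ Ext1Zero Rᵐᵒᵖ T T ∧
    ∃ (T₀ T₁ : ModuleCat.{0} Rᵐᵒᵖ) (f : R →ₗ[Rᵐᵒᵖ] ↥T₀) (g : ↥T₀ →ₗ[Rᵐᵒᵖ] ↥T₁),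
      InAdd Rᵐᵒᵖ T ↥T₀ ∧ InAdd Rᵐᵒᵖ T ↥T₁ ∧
        Function.Injective f ∧ Function.Surjective g ∧ LinearMap.range f = LinearMap.ker g

/-- `T` is basic: it is an (internal) direct sum of pairwise non-isomorphic indecomposable
submodules. -/
def IsBasicMod (A : Type) [Ring A] (T : Type) [AddCommGroup T] [Module A T] : Prop :=
  ∃ (k : ℕ) (N : Fin k → Submodule A T),
    DirectSum.IsInternal N ∧ (∀ a, IsIndecomposableMod A ↥(N a)) ∧
      ∀ a b, a ≠ b → IsEmpty (↥(N a) ≃ₗ[A] ↥(N b))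

/-- The setoid identifying isomorphic modules (among those with property `P`). -/
def isoSetoid (A : Type) [Ring A] (P : ModuleCat.{0} A → Prop) :
    Setoid {M : ModuleCat.{0} A // P M} where
  r M N := Nonempty (↥M.1 ≃ₗ[A] ↥N.1)
  iseqv := ⟨fun M => ⟨LinearEquiv.refl A ↥M.1⟩, fun ⟨e⟩ => ⟨e.symm⟩,
    fun ⟨e⟩ ⟨f⟩ => ⟨e.trans f⟩⟩

/-- The data exhibiting a ring `R` as a basic left Harada algebra:
a complete set `{e i j}` of orthogonal primitive idempotents with pairwise non-isomorphic
right ideals `(e i j)R` (`R` is basic), such that each `(e i 0)R` is an injective right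
module, and `(e i j)R ≅ rad ((e i (j-1))R)` for `j ≥ 1`.  (Indices are shifted by one from
the paper: the paper's `e_{ij}` is `e i (j-1)` here.) -/
structure HaradaData (R : Type) [Ring R] : Type where
  m : ℕ
  hm : 0 < m
  n : Fin m → ℕ
  hn : ∀ i, 0 < n i
  e : (i : Fin m) → Fin (n i) → R
  idem : ∀ i j, IsIdempotentElem (e i j)
  orth : ∀ p q : Σ i : Fin m, Fin (n i), p ≠ q → e p.1 p.2 * e q.1 q.2 = 0
  sum_eq_one : ∑ p : Σ i : Fin m, Fin (n i), e p.1 p.2 = 1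
  indec : ∀ i j, IsIndecomposableMod Rᵐᵒᵖ ↥(rightIdeal R (e i j))
  basic : ∀ p q : Σ i : Fin m, Fin (n i), p ≠ q →
    IsEmpty (↥(rightIdeal R (e p.1 p.2)) ≃ₗ[Rᵐᵒᵖ] ↥(rightIdeal R (e q.1 q.2)))
  inj : ∀ i, Module.Injective Rᵐᵒᵖ ↥(rightIdeal R (e i ⟨0, hn i⟩))
  rad_iso : ∀ (i : Fin m) (j : Fin (n i)), 0 < j.val →
    Nonempty (↥(rightIdeal R (e i j)) ≃ₗ[Rᵐᵒᵖ]
      ↥(radSub (rightIdeal R (e i ⟨j.val - 1, Nat.lt_of_le_of_lt (Nat.sub_le j.val 1) j.isLt⟩))))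

variable {R : Type} [Ring R]

/-- `H.P i j = rad^j ((e i 0)R)`; this is the paper's `P_{i,j+1} = rad^j (e_{i1}R)`,
a submodule of `R`. -/
def HaradaData.P (H : HaradaData R) (i : Fin H.m) (j : Fin (H.n i)) : Submodule Rᵐᵒᵖ R :=
  radSub^[j.val] (rightIdeal R (H.e i ⟨0, H.hn i⟩))

/-- The quotient module `P_{ik}/P_{il}` (for `l ≥ k` we have `H.P i l ≤ H.P i k`). -/
abbrev HaradaData.Quot (H : HaradaData R) (i : Fin H.m) (k l : Fin (H.n i)) : Type :=
  ↥(H.P i k) ⧸ Submodule.comap (H.P i k).subtype (H.P i l)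

/-- The last index (the paper's `n_i`) in `Fin (H.n i)`. -/
def HaradaData.last (H : HaradaData R) (i : Fin H.m) : Fin (H.n i) :=
  ⟨H.n i - 1, Nat.sub_lt (H.hn i) one_pos⟩

/-- The right ideal `I = ⊕_{i,j} rad^{n_i - j + 1}(e_{ij}R)` of the paper. -/
def HaradaData.I (H : HaradaData R) : Submodule Rᵐᵒᵖ R :=
  ⨆ p : Σ i : Fin H.m, Fin (H.n i),
    radSub^[H.n p.1 - p.2.val] (rightIdeal R (H.e p.1 p.2))

/-- The submodule `T·I` of a right module `T`, for `I` a right ideal of `R`. -/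
def smulSub (I : Submodule Rᵐᵒᵖ R) (T : Type) [AddCommGroup T] [Module Rᵐᵒᵖ T] :
    Submodule Rᵐᵒᵖ T :=
  Submodule.span Rᵐᵒᵖ {x : T | ∃ (t : T) (r : R), r ∈ I ∧ x = op r • t}

/-- Restriction of scalars along `π : R →+* S`, turning a right `S`-module into a right
`R`-module (type synonym). -/
@[nolint unusedArguments]
def RestrictRight {R S : Type} [Ring R] [Ring S] (_ : R →+* S) (N : Type) [AddCommGroup N]
    [Module Sᵐᵒᵖ N] : Type := N

instance {R S : Type} [Ring R] [Ring S] (π : R →+* S) (N : Type) [AddCommGroup N]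
    [Module Sᵐᵒᵖ N] : AddCommGroup (RestrictRight π N) := inferInstanceAs (AddCommGroup N)

instance {R S : Type} [Ring R] [Ring S] (π : R →+* S) (N : Type) [AddCommGroup N]
    [Module Sᵐᵒᵖ N] : Module Rᵐᵒᵖ (RestrictRight π N) := Module.compHom N (RingHom.op π)

/-!
Let `Q → P → T` be a projective presentation with `P` free of finite rank and `Q` projective; then
`Ext¹_R(T, M) = 0` means that every map `Q → M` extends to `P`. The idea is to compare extensions
of maps before and after reduction modulo `I` with the help of the injective module
`E = ∏ e_{i1}R`, indexed by all pairs `(i, j)`. Composing the isomorphisms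
`e_{ij}R ≅ rad(e_{i,j-1}R)` embeds `R = ⊕ e_{ij}R` into `E`; let `ε` be the image of `1`.

* If `ε a ∈ E I`, then `a ∈ I`. Since maps `Q → R ↪ E` extend to `P`, this yields
  `Q ∩ P I = Q I`, so the reduction of the presentation of `T` is a presentation of `F T` with
  kernel `Q / Q I`.
* Every element of `I` is `g ε` for some `g : E → R`. Hence every map `Q → M I` extends to `P`, so
  a map `Q → M` extends to `P` as soon as its reduction modulo `I` does.

The second property rests on the structure of `e_{i1}R`: each of its submodules is one of
`rad^l(e_{i1}R) ≅ e_{i,l+1}R` with `l < n_i`, or lies in `rad^{n_i}(e_{i1}R)`. As the `e_{ij}R` are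
pairwise non-isomorphic, a non-surjective map `e_{i1}R → e_{i'1}R` has its image in
`rad^{n_{i'}}(e_{i'1}R)`.
-/

section Semilinear

variable {A B : Type*} [Ring A] [Ring B] {φ : A →+* B}
variable {M N X : Type*} [AddCommGroup M] [Module A M] [AddCommGroup N] [Module B N]
  [AddCommGroup X]

theorem exists_comp_eq_of_ker_le_ker [RingHomSurjective φ] [Module B X] {τ : M →ₛₗ[φ] N}
    (hτ : Function.Surjective τ) (f : M →ₛₗ[φ] X)
    (hf : LinearMap.ker τ ≤ LinearMap.ker f) : ∃ g : N →ₗ[B] X, g.comp τ = f := by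
  have eq_of_eq {x y : M} (h : τ x = τ y) : f x = f y :=
    LinearMap.sub_mem_ker_iff.1 (hf (LinearMap.sub_mem_ker_iff.2 h))
  have section_eq (z : N) : τ (Function.surjInv hτ z) = z := Function.surjInv_eq hτ z
  refine ⟨{ toFun := fun z => f (Function.surjInv hτ z)
            map_add' := fun y z => ?_
            map_smul' := fun b z => ?_ }, LinearMap.ext fun x => eq_of_eq (section_eq _)⟩
  · rw [← map_add]
    exact eq_of_eq (by simp only [map_add, section_eq])
  · obtain ⟨a, rfl⟩ := φ.surjective b
    rw [RingHom.id_apply, ← LinearMap.map_smulₛₗ]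
    exact eq_of_eq (by simp only [LinearMap.map_smulₛₗ, section_eq])

theorem exists_semilinear_lift [Module A X] [Module.Projective A X] {τ : M →ₛₗ[φ] N}
    (hτ : Function.Surjective τ) (f : X →ₛₗ[φ] N) : ∃ g : X →ₗ[A] M, τ.comp g = f := by
  let _ : Module A N := Module.compHom N φ
  let τ' : M →ₗ[A] N := { τ with map_smul' := τ.map_smulₛₗ }
  let f' : X →ₗ[A] N := { f with map_smul' := f.map_smulₛₗ }
  obtain ⟨g, hg⟩ := Module.projective_lifting_property τ' f' hτ
  exact ⟨g, LinearMap.ext fun x => LinearMap.congr_fun hg x⟩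

theorem ker_smul_top_le_ker (f : M →ₛₗ[φ] N) :
    RingHom.ker φ • (⊤ : Submodule A M) ≤ LinearMap.ker f :=
  Submodule.smul_le.2 fun a ha x _ => by
    rw [LinearMap.mem_ker, LinearMap.map_smulₛₗ, RingHom.mem_ker.1 ha, zero_smul]

theorem exists_comp_eq_of_range_le_range {Y : Type*} [AddCommGroup Y] [Module A Y] [Module A X]
    {ψ : X →ₗ[A] Y} (hψ : Function.Injective ψ) {f : M →ₗ[A] Y}
    (h : LinearMap.range f ≤ LinearMap.range ψ) : ∃ g : M →ₗ[A] X, ψ ∘ₗ g = f :=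
  ⟨(LinearEquiv.ofInjective ψ hψ).symm ∘ₗ f.codRestrict _ fun x => h ⟨x, rfl⟩,
    LinearMap.ext fun x => congrArg Subtype.val
      ((LinearEquiv.ofInjective ψ hψ).apply_symm_apply ⟨f x, h ⟨x, rfl⟩⟩)⟩

theorem map_mem_smul_top [Module A X] (J : Ideal A) (f : M →ₗ[A] X) {x : M}
    (hx : x ∈ J • (⊤ : Submodule A M)) : f x ∈ J • (⊤ : Submodule A X) := by
  have hfx := Submodule.mem_map_of_mem (f := f) hx
  rw [Submodule.map_smul''] at hfx
  exact Submodule.smul_mono le_rfl le_top hfx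

/-- A `φ`-semilinear map `τ : M → N` exhibits `N` as the reduction `M / (ker φ) M` (for surjective
`φ : A → B`, this is `B ⊗_A M`). Only one inclusion is demanded of the kernel, the other being
`ker_smul_top_le_ker`. -/
structure IsReduction (τ : M →ₛₗ[φ] N) : Prop where
  surjective : Function.Surjective τ
  ker_le : LinearMap.ker τ ≤ RingHom.ker φ • ⊤

theorem IsReduction.exists_comp_eq [RingHomSurjective φ] [Module B X] {τ : M →ₛₗ[φ] N}
    (hτ : IsReduction τ) (f : M →ₛₗ[φ] X) : ∃ g : N →ₗ[B] X, g.comp τ = f :=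
  exists_comp_eq_of_ker_le_ker hτ.surjective f (hτ.ker_le.trans (ker_smul_top_le_ker f))

/-- The coordinatewise application of `φ`, as a semilinear map between free modules. -/
def piReduction (φ : A →+* B) (ι : Type*) : (ι → A) →ₛₗ[φ] (ι → B) where
  toFun x i := φ (x i)
  map_add' x y := funext fun i => map_add φ (x i) (y i)
  map_smul' a x := funext fun i => map_mul φ a (x i)

theorem isReduction_piReduction [RingHomSurjective φ] (ι : Type*) [Finite ι] :
    IsReduction (piReduction φ ι) where
  surjective := φ.surjective.comp_left
  ker_le x hx := by
    classical
    cases nonempty_fintype ι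
    rw [pi_eq_sum_univ' x]
    exact Submodule.sum_mem _ fun i _ =>
      Submodule.smul_mem_smul (RingHom.mem_ker.2 (congrFun hx i)) Submodule.mem_top

theorem IsReduction.restrict_ker {T P T' P' : Type*} [AddCommGroup T] [Module A T]
    [AddCommGroup P] [Module A P] [AddCommGroup T'] [Module B T'] [AddCommGroup P'] [Module B P']
    {τT : T →ₛₗ[φ] T'} {τP : P →ₛₗ[φ] P'} (hτT : IsReduction τT) (hτP : IsReduction τP)
    {p : P →ₗ[A] T} {p' : P' →ₗ[B] T'} (hp : Function.Surjective p)
    (hpp' : p'.comp τP = τT.comp p)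
    (hker : (RingHom.ker φ • ⊤ : Submodule A P).comap (LinearMap.ker p).subtype ≤
      RingHom.ker φ • ⊤) :
    ∃ κ : LinearMap.ker p →ₛₗ[φ] LinearMap.ker p',
      IsReduction κ ∧ ∀ q, (κ q : P') = τP q := by
  have comm (x : P) : p' (τP x) = τT (p x) := LinearMap.congr_fun hpp' x
  refine ⟨(τP.domRestrict (LinearMap.ker p)).codRestrict _ fun q => ?_, ⟨?_, fun q hq => ?_⟩,
    fun q => rfl⟩
  · rw [LinearMap.mem_ker, LinearMap.domRestrict_apply, comm, q.2, map_zero]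
  · rintro ⟨z, hz⟩
    obtain ⟨x, rfl⟩ := hτP.surjective z
    rw [LinearMap.mem_ker, comm] at hz
    have hpx : p x ∈ (RingHom.ker φ • ⊤ : Submodule A P).map p := by
      rw [Submodule.map_smul'', Submodule.map_top, LinearMap.range_eq_top.2 hp]
      exact hτT.ker_le hz
    obtain ⟨y, hy, hyx⟩ := hpx
    have hτy : τP y = 0 := ker_smul_top_le_ker τP hy
    exact ⟨⟨x - y, LinearMap.sub_mem_ker_iff.2 hyx.symm⟩, Subtype.ext (by simp [hτy])⟩
  · exact hker (hτP.ker_le (congrArg Subtype.val hq))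

end Semilinear

section Extensions

theorem projective_ker_of_projective_ker {A P P' T : Type*} [Ring A] [AddCommGroup P] [Module A P]
    [Module.Projective A P] [AddCommGroup P'] [Module A P'] [Module.Projective A P']
    [AddCommGroup T] [Module A T] {p : P →ₗ[A] T} {p' : P' →ₗ[A] T}
    (hp : Function.Surjective p) (hp' : Function.Surjective p')
    [Module.Projective A (LinearMap.ker p')] : Module.Projective A (LinearMap.ker p) := by
  obtain ⟨u, hu⟩ := Module.projective_lifting_property p' p hp'
  obtain ⟨v, hv⟩ := Module.projective_lifting_property p p' hp
  have p'_u (x : P) : p' (u x) = p x := LinearMap.congr_fun hu x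
  have p_v (x : P') : p (v x) = p' x := LinearMap.congr_fun hv x
  -- `x ↦ (-u x, x)` and `(y, x) ↦ x - v (y + u x)` exhibit `ker p` as a retract of `ker p' × P`.
  let incl : LinearMap.ker p →ₗ[A] LinearMap.ker p' × P :=
    ((-u.domRestrict _).codRestrict _ fun x => by simp [p'_u]).prod (LinearMap.ker p).subtype
  let retr : LinearMap.ker p' × P →ₗ[A] LinearMap.ker p :=
    (LinearMap.snd A _ _ - v ∘ₗ (LinearMap.ker p').subtype.coprod u).codRestrict _
      fun x => by simp [p'_u, p_v]
  refine Module.Projective.of_split incl retr (LinearMap.ext fun x => Subtype.ext ?_)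
  have retr_incl : (x : P) - v (-u x + u x) = x := by rw [neg_add_cancel, map_zero, sub_zero]
  exact retr_incl

variable {A P M N : Type} [Ring A] [AddCommGroup P] [Module A P] [AddCommGroup M] [Module A M]
  [AddCommGroup N] [Module A N] {p : P →ₗ[A] M}

theorem Ext1Zero.exists_domRestrict_eq (h : Ext1Zero A M N) (hp : Function.Surjective p)
    (f : LinearMap.ker p →ₗ[A] N) : ∃ g : P →ₗ[A] N, g.domRestrict (LinearMap.ker p) = f := by
  -- Split the pushout of `0 → ker p → P → M → 0` along `f`.
  let D := LinearMap.range (f.prod (-(LinearMap.ker p).subtype))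
  let i : N →ₗ[A] (N × P) ⧸ D := D.mkQ ∘ₗ LinearMap.inl A N P
  let q : (N × P) ⧸ D →ₗ[A] M := D.liftQ (p ∘ₗ LinearMap.snd A N P) (by
    rintro _ ⟨x, rfl⟩
    simp)
  have i_f (x : LinearMap.ker p) : i (f x) = D.mkQ (0, (x : P)) :=
    (Submodule.Quotient.eq D).2 ⟨x, by simp⟩
  have i_injective : Function.Injective i := by
    refine (injective_iff_map_eq_zero i).2 fun n hn => ?_
    obtain ⟨x, hx⟩ := (Submodule.Quotient.mk_eq_zero D).1 hn
    obtain ⟨hfx, hx⟩ := Prod.ext_iff.1 hx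
    obtain rfl : x = 0 := by simpa using hx
    simpa using hfx.symm
  have q_surjective : Function.Surjective q := fun m =>
    let ⟨x, hx⟩ := hp m
    ⟨D.mkQ (0, x), hx⟩
  have range_i : LinearMap.range i = LinearMap.ker q := by
    refine le_antisymm (LinearMap.range_le_ker_iff.2 (by ext; simp [i, q])) fun y hy => ?_
    obtain ⟨⟨n, x⟩, rfl⟩ := D.mkQ_surjective y
    have hx : p x = 0 := hy
    refine ⟨n + f ⟨x, hx⟩, ?_⟩
    rw [map_add, i_f]
    exact (D.mkQ.map_add (n, 0) (0, x)).symm.trans (by simp)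
  have exact_iq : Function.Exact i q := LinearMap.exact_iff.2 range_i.symm
  obtain ⟨-, r, hr⟩ := (exact_iq.split_tfae'.out 0 1 rfl rfl).1
    ⟨i_injective, h (ModuleCat.of A _) i q i_injective q_surjective range_i⟩
  refine ⟨r ∘ₗ D.mkQ ∘ₗ LinearMap.inr A N P, LinearMap.ext fun x => ?_⟩
  exact (congrArg r (i_f x).symm).trans (LinearMap.congr_fun hr (f x))

theorem ext1Zero_of_forall_exists_domRestrict_eq [Module.Projective A P]
    (hp : Function.Surjective p)
    (h : ∀ f : LinearMap.ker p →ₗ[A] N, ∃ g : P →ₗ[A] N, g.domRestrict (LinearMap.ker p) = f) :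
    Ext1Zero A M N := by
  intro E i q hi hq hiq
  obtain ⟨u, hu⟩ := Module.projective_lifting_property q p hq
  have range_u_le : LinearMap.range (u.domRestrict (LinearMap.ker p)) ≤ LinearMap.range i := by
    rintro _ ⟨x, rfl⟩
    rw [hiq]
    exact (LinearMap.congr_fun hu x).trans x.2
  obtain ⟨f, hf⟩ := exists_comp_eq_of_range_le_range hi range_u_le
  obtain ⟨g, hg⟩ := h f
  have i_g (x : LinearMap.ker p) : i (g x) = u x :=
    (congrArg i (LinearMap.congr_fun hg x)).trans (LinearMap.congr_fun hf x)
  have q_i : q ∘ₗ i = 0 := LinearMap.range_le_ker_iff.1 hiq.le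
  obtain ⟨s, hs⟩ := exists_comp_eq_of_ker_le_ker hp (u - i ∘ₗ g)
    fun x hx => sub_eq_zero.2 (i_g ⟨x, hx⟩).symm
  refine ⟨s, LinearMap.cancel_right hp |>.1 ?_⟩
  rw [LinearMap.comp_assoc, hs, LinearMap.comp_sub, hu, ← LinearMap.comp_assoc, q_i,
    LinearMap.zero_comp, sub_zero, LinearMap.id_comp]

theorem ext1Zero_iff_forall_exists_domRestrict_eq [Module.Projective A P]
    (hp : Function.Surjective p) :
    Ext1Zero A M N ↔ ∀ f : LinearMap.ker p →ₗ[A] N, ∃ g : P →ₗ[A] N,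
      g.domRestrict (LinearMap.ker p) = f :=
  ⟨fun h => h.exists_domRestrict_eq hp, ext1Zero_of_forall_exists_domRestrict_eq hp⟩

end Extensions

section InjectiveExtension

universe u

variable {A : Type*} [Ring A] {J : Ideal A} {E P : Type u} [AddCommGroup E] [Module A E]
  [AddCommGroup P] [Module A P] {ε : E}

theorem exists_forall_apply_eq_smul [Module.Injective A E] (N : Submodule A P) (f : N →ₗ[A] A)
    (ε : E) : ∃ ρ : P →ₗ[A] E, ∀ q : N, ρ q = f q • ε :=
  Module.Injective.out N.subtype N.injective_subtype (LinearMap.toSpanSingleton A E ε ∘ₗ f)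

theorem comap_subtype_smul_top_le [Module.Injective A E]
    (hε : ∀ a : A, a • ε ∈ J • (⊤ : Submodule A E) → a ∈ J) (N : Submodule A P)
    [Module.Projective A N] : (J • ⊤ : Submodule A P).comap N.subtype ≤ J • ⊤ := by
  intro q hq
  obtain ⟨s, hs⟩ := Module.projective_def'.1 ‹Module.Projective A N›
  have coord_mem (l : N) : s q l ∈ J := by
    obtain ⟨ρ, hρ⟩ := exists_forall_apply_eq_smul N (Finsupp.lapply l ∘ₗ s) ε
    have hρq : ρ q = s q l • ε := hρ q
    exact hε _ (hρq ▸ map_mem_smul_top J ρ hq)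
  rw [← LinearMap.id_apply (R := A) q, ← hs]
  exact Submodule.sum_mem _ fun l _ => Submodule.smul_mem_smul (coord_mem l) Submodule.mem_top

variable {M : Type*} [AddCommGroup M] [Module A M]

theorem exists_apply_eq_of_mem_smul_top (hJ : ∀ x ∈ J, ∃ g : E →ₗ[A] A, g ε = x) {m : M}
    (hm : m ∈ J • (⊤ : Submodule A M)) : ∃ g : E →ₗ[A] M, g ε = m := by
  refine Submodule.smul_induction_on hm (fun x hx m _ => ?_) ?_
  · obtain ⟨g, rfl⟩ := hJ x hx
    exact ⟨LinearMap.toSpanSingleton A M m ∘ₗ g, rfl⟩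
  · rintro _ _ ⟨g, rfl⟩ ⟨g', rfl⟩
    exact ⟨g + g', rfl⟩

theorem exists_domRestrict_eq_of_range_le_smul_top [Module.Injective A E]
    (hJ : ∀ x ∈ J, ∃ g : E →ₗ[A] A, g ε = x) (N : Submodule A P) [Module.Projective A N]
    [Module.Finite A N] (h : N →ₗ[A] M) (hrange : LinearMap.range h ≤ J • ⊤) :
    ∃ h' : P →ₗ[A] M, h'.domRestrict N = h := by
  obtain ⟨n, f, s, -, -, hfs⟩ := Module.Finite.exists_comp_eq_id_of_projective A N
  choose ρ hρ using fun l => exists_forall_apply_eq_smul N (LinearMap.proj l ∘ₗ s) ε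
  choose g hg using fun l =>
    exists_apply_eq_of_mem_smul_top hJ (hrange ⟨f (Pi.single l 1), rfl⟩)
  refine ⟨∑ l, g l ∘ₗ ρ l, LinearMap.ext fun q => ?_⟩
  calc (∑ l, g l ∘ₗ ρ l) (q : P) = ∑ l, s q l • h (f (Pi.single l 1)) := by
        simp [LinearMap.sum_apply, hρ, hg]
    _ = h (f (s q)) := by
        conv_rhs => rw [pi_eq_sum_univ' (s q)]
        simp [map_sum]
    _ = h q := congrArg h (LinearMap.congr_fun hfs q)

end InjectiveExtension

section Reduction

variable {A B : Type} [Ring A] [Ring B] {φ : A →+* B} [RingHomSurjective φ]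
variable {T T' : Type} [AddCommGroup T] [Module A T] [AddCommGroup T'] [Module B T']
  {τT : T →ₛₗ[φ] T'}

theorem ext1Zero_iff_forall_exists_semilinear {P P' X : Type} [AddCommGroup P] [Module A P]
    [AddCommGroup P'] [Module B P'] [AddCommGroup X] [Module B X] [Module.Projective B P']
    {τP : P →ₛₗ[φ] P'} (hτT : IsReduction τT) (hτP : IsReduction τP) {p : P →ₗ[A] T}
    (hp : Function.Surjective p)
    (hker : (RingHom.ker φ • ⊤ : Submodule A P).comap (LinearMap.ker p).subtype ≤
      RingHom.ker φ • ⊤) :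
    Ext1Zero B T' X ↔ ∀ g : LinearMap.ker p →ₛₗ[φ] X, ∃ g' : P →ₛₗ[φ] X,
      g'.domRestrict (LinearMap.ker p) = g := by
  obtain ⟨p', hp'⟩ := hτP.exists_comp_eq (τT.comp p)
  have p'_surjective : Function.Surjective p' := by
    refine Function.Surjective.of_comp (g := τP) ?_
    rw [← LinearMap.coe_comp, hp', LinearMap.coe_comp]
    exact hτT.surjective.comp hp
  obtain ⟨κ, hκ, coe_κ⟩ := hτT.restrict_ker hτP hp hp' hker
  rw [ext1Zero_iff_forall_exists_domRestrict_eq p'_surjective]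
  constructor
  · intro h g
    obtain ⟨f, rfl⟩ := hκ.exists_comp_eq g
    obtain ⟨f', rfl⟩ := h f
    exact ⟨f'.comp τP, LinearMap.ext fun q => congrArg f' (coe_κ q).symm⟩
  · intro h f
    obtain ⟨g, hg⟩ := h (f.comp κ)
    obtain ⟨f', rfl⟩ := hτP.exists_comp_eq g
    refine ⟨f', LinearMap.ext fun z => ?_⟩
    obtain ⟨q, rfl⟩ := hκ.surjective z
    exact (congrArg f' (coe_κ q)).trans (LinearMap.congr_fun hg q)

theorem ext1Zero_iff_ext1Zero_of_isReduction [IsNoetherianRing A] {E : Type} [AddCommGroup E]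
    [Module A E] [Module.Injective A E] {ε : E}
    (hε : ∀ a : A, a • ε ∈ RingHom.ker φ • (⊤ : Submodule A E) → a ∈ RingHom.ker φ)
    (hJ : ∀ x ∈ RingHom.ker φ, ∃ g : E →ₗ[A] A, g ε = x)
    [Module.Finite A T] (hpd : PdLeOne A T) (hτT : IsReduction τT)
    {M M' : Type} [AddCommGroup M] [Module A M] [AddCommGroup M'] [Module B M']
    {τM : M →ₛₗ[φ] M'} (hτM : IsReduction τM) :
    Ext1Zero A T M ↔ Ext1Zero B T' M' := by
  obtain ⟨n, p, hp⟩ := Module.Finite.exists_fin' A T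
  obtain ⟨P', p', _, hp', _⟩ := hpd
  have : Module.Projective A (LinearMap.ker p) := projective_ker_of_projective_ker hp hp'
  rw [ext1Zero_iff_forall_exists_domRestrict_eq hp,
    ext1Zero_iff_forall_exists_semilinear hτT (isReduction_piReduction (Fin n)) hp
      (comap_subtype_smul_top_le hε _)]
  constructor
  · intro h g
    obtain ⟨f, rfl⟩ := exists_semilinear_lift hτM.surjective g
    obtain ⟨f', rfl⟩ := h f
    exact ⟨τM.comp f', rfl⟩
  · intro h f
    obtain ⟨g, hg⟩ := h (τM.comp f)
    obtain ⟨k, rfl⟩ := exists_semilinear_lift hτM.surjective g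
    have range_le : LinearMap.range (f - k.domRestrict (LinearMap.ker p)) ≤
        RingHom.ker φ • ⊤ := by
      rintro _ ⟨q, rfl⟩
      exact hτM.ker_le (LinearMap.sub_mem_ker_iff.2 (LinearMap.congr_fun hg q).symm)
    obtain ⟨d, hd⟩ := exists_domRestrict_eq_of_range_le_smul_top hJ _ _ range_le
    exact ⟨d + k, LinearMap.ext fun q => eq_sub_iff_add_eq.1 (LinearMap.congr_fun hd q)⟩

end Reduction

section Radical

theorem jacobson_eq_jacobson_smul_top {A M : Type*} [Ring A]
    [IsSemisimpleRing (A ⧸ Ring.jacobson A)] [AddCommGroup M] [Module A M] :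
    Module.jacobson A M = Ring.jacobson A • ⊤ := by
  have : IsSemisimpleModule A (M ⧸ Ring.jacobson A • (⊤ : Submodule A M)) :=
    (Module.isTorsionBySet_quotient_ideal_smul M _).isSemisimpleModule_iff.1 inferInstance
  exact le_antisymm (Module.jacobson_le_of_eq_bot (IsSemisimpleModule.jacobson_eq_bot A _))
    (Ring.jacobson_smul_top_le A M)

variable {A M : Type} [Ring A] [IsSemisimpleRing (A ⧸ Ring.jacobson A)] [AddCommGroup M]
  [Module A M]

theorem radSub_eq_jacobson_smul (X : Submodule A M) : radSub X = Ring.jacobson A • X :=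
  calc radSub X = (Module.jacobson A X).map X.subtype := rfl
    _ = Ring.jacobson A • X := by
      rw [jacobson_eq_jacobson_smul_top, Submodule.map_smul'', Submodule.map_subtype_top]

theorem radSub_iterate_eq_jacobson_pow_smul (X : Submodule A M) (k : ℕ) :
    radSub^[k] X = Ring.jacobson A ^ k • X := by
  induction k with
  | zero => rw [Function.iterate_zero_apply, Submodule.pow_zero, Submodule.one_smul]
  | succ k ih =>
    rw [Function.iterate_succ_apply', radSub_eq_jacobson_smul, ih, ← Submodule.mul_smul,
      ← Ideal.IsTwoSided.pow_succ]

end Radical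

namespace IsIndecomposableMod

variable {A M : Type} [Ring A] [AddCommGroup M] [Module A M]

theorem isNilpotent_or_isUnit [IsNoetherian A M] [IsArtinian A M] (hM : IsIndecomposableMod A M)
    (f : Module.End A M) : IsNilpotent f ∨ IsUnit f := by
  obtain ⟨k, hk⟩ := (f.eventually_isCompl_ker_pow_range_pow.and
    (Filter.eventually_ge_atTop 1)).exists
  obtain ⟨fitting, k_pos⟩ := hk
  rcases hM.2 _ _ fitting with ker_eq | range_eq
  · have range_eq : LinearMap.range (f ^ k) = ⊤ := by
      rw [← fitting.sup_eq_top, ker_eq, bot_sup_eq]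
    right
    rw [← isUnit_pow_iff (Nat.one_le_iff_ne_zero.1 k_pos), Module.End.isUnit_iff]
    exact ⟨LinearMap.ker_eq_bot.1 ker_eq, LinearMap.range_eq_top.1 range_eq⟩
  · exact .inl ⟨k, LinearMap.range_eq_bot.1 range_eq⟩

theorem le_jacobson_of_ne_top [IsNoetherian A M] [IsArtinian A M] [Module.Projective A M]
    (hM : IsIndecomposableMod A M) {X : Submodule A M} (hX : X ≠ ⊤) :
    X ≤ Module.jacobson A M := by
  refine le_sInf fun Y hY => of_not_not fun hXY => ?_
  have sup_eq : Y ⊔ X = ⊤ := hY.2 _ (left_lt_sup.2 hXY)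
  have proj_surjective : Function.Surjective (Y.mkQ ∘ₗ X.subtype) := by
    rwa [← LinearMap.range_eq_top, LinearMap.range_comp, Submodule.range_subtype,
      Submodule.map_mkQ_eq_top]
  -- Modulo `Y`, the identity factors through `X`, so it lifts to an endomorphism into `X`.
  obtain ⟨g, hg⟩ := Module.projective_lifting_property (Y.mkQ ∘ₗ X.subtype) Y.mkQ proj_surjective
  let f : Module.End A M := X.subtype ∘ₗ g
  rcases hM.isNilpotent_or_isUnit f with f_nilpotent | f_unit
  · refine hY.1 (Submodule.eq_top_iff'.2 fun m => ?_)
    obtain ⟨y, rfl⟩ := ((Module.End.isUnit_iff _).1 f_nilpotent.isUnit_one_sub).2 m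
    exact (Submodule.Quotient.eq Y).1 (LinearMap.congr_fun hg y).symm
  · refine hX (Submodule.eq_top_iff'.2 fun m => ?_)
    obtain ⟨y, rfl⟩ := ((Module.End.isUnit_iff _).1 f_unit).2 m
    exact (g y).2

theorem injective_of_surjective {N : Type*} [AddCommGroup N] [Module A N] [Module.Projective A N]
    [Nontrivial N] (hM : IsIndecomposableMod A M) {g : M →ₗ[A] N} (hg : Function.Surjective g) :
    Function.Injective g := by
  obtain ⟨s, hs⟩ := Module.projective_lifting_property g LinearMap.id hg
  have g_s (y : N) : g (s y) = y := LinearMap.congr_fun hs y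
  have idem : IsIdempotentElem (s ∘ₗ g : Module.End A M) :=
    LinearMap.ext fun x => congrArg s (g_s (g x))
  rcases hM.2 _ _ (LinearMap.IsIdempotentElem.isCompl idem) with range_eq | ker_eq
  · obtain ⟨y, hy⟩ := exists_ne (0 : N)
    have s_eq_zero : s y = 0 := by
      obtain ⟨x, rfl⟩ := hg y
      exact LinearMap.congr_fun (LinearMap.range_eq_bot.1 range_eq) x
    exact absurd (by rw [← g_s y, s_eq_zero, map_zero]) hy
  · exact Function.Injective.of_comp (f := s) (LinearMap.ker_eq_bot.1 ker_eq)

end IsIndecomposableMod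

section RightIdeal

theorem mem_rightIdeal_iff_mul_eq {x y : R} (hx : IsIdempotentElem x) :
    y ∈ rightIdeal R x ↔ x * y = y := by
  refine Submodule.mem_span_singleton.trans ⟨?_, fun h => ⟨op y, h⟩⟩
  rintro ⟨a, rfl⟩
  rw [mul_smul_comm, hx.eq]

instance (x : R) : Module.Finite Rᵐᵒᵖ (rightIdeal R x) :=
  inferInstanceAs (Module.Finite Rᵐᵒᵖ (Submodule.span Rᵐᵒᵖ {x}))

theorem projective_rightIdeal {x : R} (hx : IsIdempotentElem x) :
    Module.Projective Rᵐᵒᵖ (rightIdeal R x) := by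
  have : Module.Projective Rᵐᵒᵖ R := .of_equiv (MulOpposite.opLinearEquiv Rᵐᵒᵖ (M := R)).symm
  refine Module.Projective.of_split (rightIdeal R x).subtype
    ((LinearMap.mulLeft Rᵐᵒᵖ x).codRestrict (rightIdeal R x) fun y =>
      (mem_rightIdeal_iff_mul_eq hx).2 ?_)
    (LinearMap.ext fun y => Subtype.ext ((mem_rightIdeal_iff_mul_eq hx).1 y.2))
  rw [LinearMap.mulLeft_apply, ← mul_assoc, hx.eq]

end RightIdeal

namespace HaradaData

local notation "𝔯" => Ring.jacobson Rᵐᵒᵖ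

variable (H : HaradaData R)

/-- The injective indecomposable projective right ideal `e_{i1}R` of the paper. -/
abbrev top (i : Fin H.m) : Submodule Rᵐᵒᵖ R := rightIdeal R (H.e i ⟨0, H.hn i⟩)

theorem eq_of_surjective {p q : Σ i : Fin H.m, Fin (H.n i)}
    {f : rightIdeal R (H.e p.1 p.2) →ₗ[Rᵐᵒᵖ] rightIdeal R (H.e q.1 q.2)}
    (hf : Function.Surjective f) : p = q := by
  have := projective_rightIdeal (H.idem q.1 q.2)
  have := (H.indec q.1 q.2).1
  by_contra hpq
  exact (H.basic p q hpq).false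
    (.ofBijective f ⟨(H.indec p.1 p.2).injective_of_surjective hf, hf⟩)

section Embedding

variable [IsSemisimpleRing (Rᵐᵒᵖ ⧸ Ring.jacobson Rᵐᵒᵖ)]

theorem exists_embedding (i : Fin H.m) (j : Fin (H.n i)) :
    ∃ f : rightIdeal R (H.e i j) →ₗ[Rᵐᵒᵖ] H.top i,
      Function.Injective f ∧ LinearMap.range f = 𝔯 ^ (j : ℕ) • ⊤ := by
  obtain ⟨j, hj⟩ := j
  induction j with
  | zero => exact ⟨LinearMap.id, Function.injective_id, by
      rw [LinearMap.range_id, Submodule.pow_zero, Submodule.one_smul]⟩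
  | succ j ih =>
    obtain ⟨f, hf, range_f⟩ := ih (Nat.lt_of_succ_lt hj)
    let X := rightIdeal R (H.e i ⟨j, Nat.lt_of_succ_lt hj⟩)
    obtain ⟨ψ : _ ≃ₗ[Rᵐᵒᵖ] radSub X⟩ := H.rad_iso i ⟨j + 1, hj⟩ j.succ_pos
    let ι : radSub X →ₗ[Rᵐᵒᵖ] X := Submodule.inclusion (Submodule.map_subtype_le X _)
    have range_ι : LinearMap.range ι = 𝔯 • ⊤ :=
      calc LinearMap.range ι = (radSub X).comap X.subtype := Submodule.range_inclusion _ _ _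
        _ = Module.jacobson Rᵐᵒᵖ X := Submodule.comap_map_eq_of_injective X.subtype_injective _
        _ = 𝔯 • ⊤ := jacobson_eq_jacobson_smul_top
    have ι_injective : Function.Injective ι := Submodule.inclusion_injective _
    refine ⟨f ∘ₗ ι ∘ₗ ψ, hf.comp (ι_injective.comp ψ.injective), ?_⟩
    rw [LinearMap.range_comp, LinearMap.range_comp_of_range_eq_top _ ψ.range, range_ι,
      Submodule.map_smul'', Submodule.map_top, range_f, ← Submodule.mul_smul,
      ← Ideal.IsTwoSided.pow_succ]

/-- A chosen embedding `e_{ij}R ↪ e_{i1}R` of right modules, with image `rad^{j-1}(e_{i1}R)` in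
the paper's numbering; it is a composite of the isomorphisms `e_{ij}R ≅ rad(e_{i,j-1}R)`. -/
noncomputable def embed (i : Fin H.m) (j : Fin (H.n i)) :
    rightIdeal R (H.e i j) →ₗ[Rᵐᵒᵖ] H.top i :=
  (H.exists_embedding i j).choose

theorem embed_injective (i : Fin H.m) (j : Fin (H.n i)) : Function.Injective (H.embed i j) :=
  (H.exists_embedding i j).choose_spec.1

theorem range_embed (i : Fin H.m) (j : Fin (H.n i)) :
    LinearMap.range (H.embed i j) = 𝔯 ^ (j : ℕ) • ⊤ :=
  (H.exists_embedding i j).choose_spec.2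

theorem map_embed_pow_smul_top (i : Fin H.m) (j : Fin (H.n i)) :
    (𝔯 ^ (H.n i - j) • ⊤ : Submodule Rᵐᵒᵖ _).map (H.embed i j) = 𝔯 ^ H.n i • ⊤ := by
  rw [Submodule.map_smul'', Submodule.map_top, range_embed, ← Submodule.mul_smul,
    ← Ideal.IsTwoSided.pow_add, Nat.sub_add_cancel j.isLt.le]

end Embedding

variable [IsArtinianRing Rᵐᵒᵖ]

theorem le_pow_smul_top_or_exists_eq (i : Fin H.m) {k : ℕ} (hk : k ≤ H.n i)
    (X : Submodule Rᵐᵒᵖ (H.top i)) : X ≤ 𝔯 ^ k • ⊤ ∨ ∃ l < k, X = 𝔯 ^ l • ⊤ := by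
  induction k with
  | zero => exact .inl (by rw [Submodule.pow_zero, Submodule.one_smul]; exact le_top)
  | succ k ih =>
    rcases ih (Nat.le_of_succ_le hk) with X_le | ⟨l, hl, X_eq⟩
    · have map_comap : (X.comap (H.embed i ⟨k, hk⟩)).map (H.embed i ⟨k, hk⟩) = X := by
        rwa [Submodule.map_comap_eq, range_embed, inf_eq_right]
      by_cases comap_eq : X.comap (H.embed i ⟨k, hk⟩) = ⊤
      · refine .inr ⟨k, k.lt_succ_self, ?_⟩
        rw [← map_comap, comap_eq, Submodule.map_top, range_embed]
      · have := projective_rightIdeal (H.idem i ⟨k, hk⟩)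
        have comap_le := (H.indec i ⟨k, hk⟩).le_jacobson_of_ne_top comap_eq
        rw [jacobson_eq_jacobson_smul_top] at comap_le
        left
        calc X ≤ (𝔯 • ⊤ : Submodule Rᵐᵒᵖ _).map (H.embed i ⟨k, hk⟩) :=
              map_comap ▸ Submodule.map_mono comap_le
          _ = 𝔯 ^ (k + 1) • ⊤ := by
              rw [Submodule.map_smul'', Submodule.map_top, range_embed, ← Submodule.mul_smul,
                ← Ideal.IsTwoSided.pow_succ]
    · exact .inr ⟨l, hl.trans k.lt_succ_self, X_eq⟩

theorem range_le_pow_smul_top_of_not_surjective {i i' : Fin H.m}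
    {f : H.top i →ₗ[Rᵐᵒᵖ] H.top i'} (hf : ¬Function.Surjective f) :
    LinearMap.range f ≤ 𝔯 ^ H.n i' • ⊤ := by
  rcases H.le_pow_smul_top_or_exists_eq i' le_rfl (LinearMap.range f) with h | ⟨l, hl, range_f⟩
  · exact h
  rw [← H.range_embed i' ⟨l, hl⟩] at range_f
  obtain ⟨g, rfl⟩ := exists_comp_eq_of_range_le_range (H.embed_injective _ _) range_f.le
  have g_surjective : Function.Surjective g := by
    rw [LinearMap.range_comp] at range_f
    rw [← LinearMap.range_eq_top]
    apply Submodule.map_injective_of_injective (H.embed_injective _ _)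
    rw [range_f, Submodule.map_top]
  obtain rfl : l = 0 := by
    have := H.eq_of_surjective (p := ⟨i, ⟨0, H.hn i⟩⟩) (q := ⟨i', ⟨l, hl⟩⟩) g_surjective
    cases this
    rfl
  refine absurd (LinearMap.range_eq_top.1 ?_) hf
  rw [range_f, range_embed, Submodule.pow_zero, Submodule.one_smul]

theorem not_pow_smul_top_le (i : Fin H.m) (j : Fin (H.n i)) :
    ¬(𝔯 ^ (j : ℕ) • ⊤ : Submodule Rᵐᵒᵖ (H.top i)) ≤ 𝔯 ^ H.n i • ⊤ := by
  intro h
  have le_smul : (𝔯 ^ (j : ℕ) • ⊤ : Submodule Rᵐᵒᵖ (H.top i)) ≤ 𝔯 • 𝔯 ^ (j : ℕ) • ⊤ := by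
    rw [← Submodule.mul_smul, ← Ideal.IsTwoSided.pow_succ]
    exact h.trans (Submodule.smul_mono (Ideal.pow_le_pow_right j.isLt) le_rfl)
  have eq_bot := (IsNoetherian.noetherian _).eq_bot_of_le_jacobson_smul le_smul
  rw [← range_embed, LinearMap.range_eq_bot] at eq_bot
  have := (H.indec i j).1
  obtain ⟨y, hy⟩ := exists_ne (0 : rightIdeal R (H.e i j))
  exact hy (H.embed_injective i j (by rw [eq_bot, LinearMap.zero_apply, LinearMap.zero_apply]))

theorem exists_comp_embed_eq {i i' : Fin H.m} (j : Fin (H.n i)) {j' : Fin (H.n i')}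
    {f : rightIdeal R (H.e i j) →ₗ[Rᵐᵒᵖ] rightIdeal R (H.e i' j')}
    (hf : LinearMap.range f ≤ 𝔯 ^ (H.n i' - j') • ⊤) :
    ∃ g : H.top i →ₗ[Rᵐᵒᵖ] rightIdeal R (H.e i' j'), g ∘ₗ H.embed i j = f := by
  have := H.inj i'
  obtain ⟨g₁, hg₁⟩ := Module.Injective.out (H.embed i j) (H.embed_injective i j)
    (H.embed i' j' ∘ₗ f)
  have map_range_le : (LinearMap.range (H.embed i j)).map g₁ ≤ 𝔯 ^ H.n i' • ⊤ := by
    rw [← LinearMap.range_comp, LinearMap.ext hg₁ (f := g₁ ∘ₗ H.embed i j),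
      LinearMap.range_comp, ← H.map_embed_pow_smul_top i' j']
    exact Submodule.map_mono hf
  have not_surjective : ¬Function.Surjective g₁ := fun hsurj => by
    obtain rfl : i = i' := congrArg Sigma.fst
      (H.eq_of_surjective (p := ⟨i, ⟨0, H.hn i⟩⟩) (q := ⟨i', ⟨0, H.hn i'⟩⟩) hsurj)
    rw [range_embed, Submodule.map_smul'', Submodule.map_top, LinearMap.range_eq_top.2 hsurj]
      at map_range_le
    exact H.not_pow_smul_top_le i j map_range_le
  have range_le : LinearMap.range g₁ ≤ LinearMap.range (H.embed i' j') := by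
    rw [range_embed]
    exact (H.range_le_pow_smul_top_of_not_surjective not_surjective).trans
      (Submodule.smul_mono (Ideal.pow_le_pow_right j'.isLt.le) le_rfl)
  obtain ⟨g, rfl⟩ := exists_comp_eq_of_range_le_range (H.embed_injective i' j') range_le
  exact ⟨g, LinearMap.ext fun y => H.embed_injective i' j' (hg₁ y)⟩

theorem I_eq_iSup : H.I = ⨆ p : Σ i : Fin H.m, Fin (H.n i),
    𝔯 ^ (H.n p.1 - p.2) • rightIdeal R (H.e p.1 p.2) :=
  iSup_congr fun _ => radSub_iterate_eq_jacobson_pow_smul _ _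

theorem exists_apply_embed_eq_mul {z : R} (hz : z ∈ H.I) (i : Fin H.m) (j : Fin (H.n i)) :
    ∃ g : H.top i →ₗ[Rᵐᵒᵖ] R, ∀ y, g (H.embed i j y) = z * y := by
  rw [I_eq_iSup] at hz
  refine Submodule.iSup_induction _
    (motive := fun z => ∃ g : H.top i →ₗ[Rᵐᵒᵖ] R, ∀ y, g (H.embed i j y) = z * y)
    hz (fun q z hz => ?_) ⟨0, fun y => (zero_mul (y : R)).symm⟩ ?_
  · have mul_mem (y : rightIdeal R (H.e i j)) : z * y ∈ _ := Submodule.smul_mem _ (op (y : R)) hz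
    let f : rightIdeal R (H.e i j) →ₗ[Rᵐᵒᵖ] rightIdeal R (H.e q.1 q.2) :=
      ((LinearMap.mulLeft Rᵐᵒᵖ z).domRestrict _).codRestrict _ fun y =>
        Submodule.smul_le_right (mul_mem y)
    have range_f : LinearMap.range f ≤ 𝔯 ^ (H.n q.1 - q.2) • ⊤ := by
      rintro _ ⟨y, rfl⟩
      exact (Submodule.mem_smul_top_iff _ _ _).2 (mul_mem y)
    obtain ⟨g, hg⟩ := H.exists_comp_embed_eq j range_f
    exact ⟨(rightIdeal R (H.e q.1 q.2)).subtype ∘ₗ g, fun y =>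
      congrArg Subtype.val (LinearMap.congr_fun hg y)⟩
  · rintro z₁ z₂ ⟨g₁, hg₁⟩ ⟨g₂, hg₂⟩
    exact ⟨g₁ + g₂, fun y => by rw [LinearMap.add_apply, hg₁, hg₂, add_mul]⟩

theorem mul_mem_of_mem_I {z : R} (hz : z ∈ H.I) (p : Σ i : Fin H.m, Fin (H.n i)) :
    H.e p.1 p.2 * z ∈ 𝔯 ^ (H.n p.1 - p.2) • rightIdeal R (H.e p.1 p.2) := by
  rw [I_eq_iSup] at hz
  refine Submodule.iSup_induction _
    (motive := fun z => H.e p.1 p.2 * z ∈ 𝔯 ^ (H.n p.1 - p.2) • rightIdeal R (H.e p.1 p.2))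
    hz (fun q z hz => ?_) ?_ fun z₁ z₂ h₁ h₂ => ?_
  · have e_mul_z := (mem_rightIdeal_iff_mul_eq (H.idem q.1 q.2)).1 (Submodule.smul_le_right hz)
    by_cases hpq : p = q
    · subst hpq
      rwa [e_mul_z]
    · rw [← e_mul_z, ← mul_assoc, H.orth p q hpq, zero_mul]
      exact zero_mem _
  · rw [mul_zero]
    exact zero_mem _
  · rw [mul_add]
    exact add_mem h₁ h₂

/-- The vector `ε` of the injective module `∏ e_{i1}R` whose `(i, j)`-component is the image of
`e_{ij}` under `e_{ij}R ↪ e_{i1}R`, i.e. the image of `1` under the embedding of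
`R = ⊕ e_{ij}R`. -/
noncomputable def testVector (p : Σ i : Fin H.m, Fin (H.n i)) : H.top p.1 :=
  H.embed p.1 p.2 ⟨H.e p.1 p.2, Submodule.mem_span_singleton_self _⟩

theorem exists_apply_testVector_eq {z : R} (hz : z ∈ H.I) :
    ∃ g : (∀ p : Σ i : Fin H.m, Fin (H.n i), H.top p.1) →ₗ[Rᵐᵒᵖ] R, g H.testVector = z := by
  choose g hg using fun p : Σ i : Fin H.m, Fin (H.n i) =>
    H.exists_apply_embed_eq_mul hz p.1 p.2
  refine ⟨∑ p, g p ∘ₗ LinearMap.proj p, ?_⟩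
  calc (∑ p, g p ∘ₗ LinearMap.proj p) H.testVector = ∑ p, g p (H.testVector p) :=
        LinearMap.sum_apply _ _ _
    _ = ∑ p : Σ i : Fin H.m, Fin (H.n i), z * H.e p.1 p.2 :=
        Finset.sum_congr rfl fun p _ => hg p _
    _ = z := by rw [← Finset.mul_sum, H.sum_eq_one, mul_one]

section TwoSided

variable {J : Ideal Rᵐᵒᵖ} [J.IsTwoSided]

theorem ideal_smul_top_le_pow_smul_top (hJ : ∀ r, op r ∈ J ↔ r ∈ H.I) (i : Fin H.m) :
    (J • ⊤ : Submodule Rᵐᵒᵖ (H.top i)) ≤ 𝔯 ^ H.n i • ⊤ := by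
  refine Submodule.smul_le.2 fun a ha t _ => (Submodule.mem_smul_top_iff _ _ _).2 ?_
  have mul_mem_I : (t : R) * unop a ∈ H.I := (hJ _).1 (J.mul_mem_right (op (t : R)) ha)
  have e_mul_t : _ * (t : R) = t := (mem_rightIdeal_iff_mul_eq (H.idem i ⟨0, H.hn i⟩)).1 t.2
  have mem := H.mul_mem_of_mem_I mul_mem_I ⟨i, ⟨0, H.hn i⟩⟩
  rwa [← mul_assoc, e_mul_t] at mem

theorem mem_of_smul_testVector_mem (hJ : ∀ r, op r ∈ J ↔ r ∈ H.I) {a : Rᵐᵒᵖ}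
    (ha : a • H.testVector ∈ J • (⊤ : Submodule Rᵐᵒᵖ (∀ p : Σ i, Fin (H.n i), H.top p.1))) :
    a ∈ J := by
  have mul_mem (p : Σ i : Fin H.m, Fin (H.n i)) : H.e p.1 p.2 * unop a ∈ H.I := by
    have mem := H.ideal_smul_top_le_pow_smul_top hJ p.1 (map_mem_smul_top J (LinearMap.proj p) ha)
    rw [← H.map_embed_pow_smul_top p.1 p.2] at mem
    obtain ⟨w, hw, w_eq⟩ := mem
    obtain rfl : w = a • ⟨H.e p.1 p.2, Submodule.mem_span_singleton_self _⟩ :=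
      H.embed_injective p.1 p.2 (w_eq.trans (map_smul (H.embed p.1 p.2) a _).symm)
    rw [I_eq_iSup]
    exact Submodule.mem_iSup_of_mem p ((Submodule.mem_smul_top_iff _ _ _).1 hw)
  refine (hJ (unop a)).2 ?_
  rw [← one_mul (unop a), ← H.sum_eq_one, Finset.sum_mul]
  exact sum_mem fun p _ => mul_mem p

end TwoSided

end HaradaData

section Restriction

variable {S : Type} [Ring S] {π : R →+* S} {I : Submodule Rᵐᵒᵖ R}

theorem mem_ker_op_iff {a : Rᵐᵒᵖ} : a ∈ RingHom.ker (RingHom.op π) ↔ π (unop a) = 0 :=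
  RingHom.mem_ker.trans (op_eq_zero_iff _)

theorem smulSub_eq_ker_op_smul_top (hI : ∀ x, π x = 0 ↔ x ∈ I) (T : Type) [AddCommGroup T]
    [Module Rᵐᵒᵖ T] : smulSub I T = RingHom.ker (RingHom.op π) • ⊤ := by
  refine le_antisymm (Submodule.span_le.2 ?_) (Submodule.smul_le.2 fun a ha t _ => ?_)
  · rintro _ ⟨t, r, hr, rfl⟩
    exact Submodule.smul_mem_smul (mem_ker_op_iff.2 ((hI r).2 hr)) Submodule.mem_top
  · exact Submodule.subset_span ⟨t, unop a, (hI _).1 (mem_ker_op_iff.1 ha), rfl⟩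

theorem exists_isReduction_of_restrictRight_equiv (hI : ∀ x, π x = 0 ↔ x ∈ I) {T N : Type}
    [AddCommGroup T] [Module Rᵐᵒᵖ T] [AddCommGroup N] [Module Sᵐᵒᵖ N]
    (e : RestrictRight π N ≃ₗ[Rᵐᵒᵖ] T ⧸ smulSub I T) :
    ∃ τ : T →ₛₗ[RingHom.op π] N, IsReduction τ := by
  let f : T →ₗ[Rᵐᵒᵖ] RestrictRight π N := e.symm.toLinearMap ∘ₗ (smulSub I T).mkQ
  refine ⟨⟨⟨f, map_add f⟩, map_smul f⟩, ?_, fun t ht => ?_⟩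
  · exact e.symm.surjective.comp (smulSub I T).mkQ_surjective
  · rw [← smulSub_eq_ker_op_smul_top hI, ← Submodule.Quotient.mk_eq_zero]
    exact e.symm.map_eq_zero_iff.1 ht

end Restriction

theorem statement17_general [IsArtinianRing Rᵐᵒᵖ] (H : HaradaData R) {S : Type} [Ring S]
    {π : R →+* S} (hsurj : Function.Surjective π) (hker : ∀ x, π x = 0 ↔ x ∈ H.I)
    {T M FT FM : Type} [AddCommGroup T] [Module Rᵐᵒᵖ T] [AddCommGroup M] [Module Rᵐᵒᵖ M]
    [AddCommGroup FT] [Module Sᵐᵒᵖ FT] [AddCommGroup FM] [Module Sᵐᵒᵖ FM]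
    [Module.Finite Rᵐᵒᵖ T] (hpd : PdLeOne Rᵐᵒᵖ T)
    (eT : RestrictRight π FT ≃ₗ[Rᵐᵒᵖ] T ⧸ smulSub H.I T)
    (eM : RestrictRight π FM ≃ₗ[Rᵐᵒᵖ] M ⧸ smulSub H.I M) :
    Ext1Zero Rᵐᵒᵖ T M ↔ Ext1Zero Sᵐᵒᵖ FT FM := by
  have : RingHomSurjective (RingHom.op π) := ⟨op_surjective.comp (hsurj.comp unop_surjective)⟩
  have (p : Σ i, Fin (H.n i)) : Module.Injective Rᵐᵒᵖ (H.top p.1) := H.inj p.1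
  obtain ⟨τT, hτT⟩ := exists_isReduction_of_restrictRight_equiv hker eT
  obtain ⟨τM, hτM⟩ := exists_isReduction_of_restrictRight_equiv hker eM
  refine ext1Zero_iff_ext1Zero_of_isReduction (ε := H.testVector)
    (fun _ => H.mem_of_smul_testVector_mem fun r => mem_ker_op_iff.trans (hker r))
    (fun x hx => ?_) hpd hτT hτM
  obtain ⟨g, hg⟩ := H.exists_apply_testVector_eq ((hker _).1 (mem_ker_op_iff.1 hx))
  exact ⟨(opLinearEquiv Rᵐᵒᵖ).toLinearMap ∘ₗ g, congrArg op hg⟩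

/-- Proposition 4.5.  For every finitely generated right `R`-module `T` of
projective dimension at most one, `Ext¹_R(T,T) = 0` iff `Ext¹_{R̄}(F T, F T) = 0`, where
`R̄ = R/I` is presented by a surjective ring homomorphism `π : R → S` with kernel `I` and
`F T = T ⊗_R R̄ = T/T·I` with its natural right `S`-module structure. -/
theorem statement17 (K R : Type) [Field K] [IsAlgClosed K] [Ring R] [Algebra K R]
    [FiniteDimensional K R] (H : HaradaData R)
    (S : Type) [Ring S] (π : R →+* S) (hsurj : Function.Surjective π)
    (hker : ∀ x : R, π x = 0 ↔ x ∈ H.I)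
    (T : Type) [AddCommGroup T] [Module Rᵐᵒᵖ T]
    (hfin : Module.Finite Rᵐᵒᵖ T) (hpd : PdLeOne Rᵐᵒᵖ T)
    (FT : ModuleCat.{0} Sᵐᵒᵖ)
    (hFT : Nonempty (RestrictRight π ↥FT ≃ₗ[Rᵐᵒᵖ] (T ⧸ smulSub H.I T))) :
    Ext1Zero Rᵐᵒᵖ T T ↔ Ext1Zero Sᵐᵒᵖ ↥FT ↥FT := by
  have : IsArtinianRing Rᵐᵒᵖ := .of_finite K Rᵐᵒᵖ
  obtain ⟨e⟩ := hFT
  exact statement17_general H hsurj hker hpd e e
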